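/- arXiv:2110.13078 — 2 statements merged into one kernel-verified Lean document; each statement's English description precedes it below -/
import Mathlib

section
/- For a given finite alphabet A, there exist real positive constants μ and π (depending on the size of A) such that for every finite nonempty rich word w over A with n = |w|, the length of the UPS-factorization of w satisfies LUF(w) ≤ μ · n / e^{π√(ln n)}. -/
/-- A finite word is a palindrome if it equals its reversal. -/
def IsPalindrome {A : Type*} (w : List A) : Prop := w.reverse = w

/-- A finite word `w` is rich if it contains `|w| + 1` distinct palindromic
factors, including the empty word. -/
def IsRichWord {A : Type*} (w : List A) : Prop :=
  {u : List A | u <:+: w ∧ IsPalindrome u}.ncard = w.length + 1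

/-- `ws = [w_p, w_{p-1}, …, w_1]` is the UPS-factorization of `w`:
the `w_i` are distinct nonempty palindromes, `w = w_p w_{p-1} ⋯ w_1`, and
each `w_i` is the longest palindromic suffix of `w_p w_{p-1} ⋯ w_i`. -/
def IsUPSFactorization {A : Type*} (w : List A) (ws : List (List A)) : Prop :=
  ws ≠ [] ∧ ws.Nodup ∧ (∀ u ∈ ws, u ≠ [] ∧ IsPalindrome u) ∧ w = ws.flatten ∧
    ∀ j (h : j < ws.length),
      ws.get ⟨j, h⟩ <:+ (ws.take (j + 1)).flatten ∧
        ∀ v : List A, v <:+ (ws.take (j + 1)).flatten → IsPalindrome v →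
          v.length ≤ (ws.get ⟨j, h⟩).length

namespace RichAux

variable {A : Type*}

/-- Palindromic factors. -/
def Pal (w : List A) : Set (List A) := {u | u <:+: w ∧ IsPalindrome u}

/-- Palindromic factors of length at most `m`. -/
def PS (w : List A) (m : ℕ) : Set (List A) := {u | u ∈ Pal w ∧ u.length ≤ m}

/-- Words of length `m` which are factors up to reversal. -/
def GS (w : List A) (m : ℕ) : Set (List A) :=
  {v | v.length = m ∧ (v <:+: w ∨ v.reverse <:+: w)}

lemma fac_finite (w : List A) : {u : List A | u <:+: w}.Finite := by
  refine (List.finite_toSet w.sublists).subset ?_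
  intro u hu
  exact List.mem_sublists.2 (List.IsInfix.sublist hu)

lemma pal_finite (w : List A) : (Pal w).Finite :=
  (fac_finite w).subset (fun _ h => h.1)

lemma ps_finite (w : List A) (m : ℕ) : (PS w m).Finite :=
  (pal_finite w).subset (fun _ h => h.1)

lemma gs_finite (w : List A) (m : ℕ) : (GS w m).Finite := by
  refine ((fac_finite w).union ((fac_finite w).image List.reverse)).subset ?_
  rintro v ⟨_, h | h⟩
  · exact Or.inl h
  · exact Or.inr ⟨v.reverse, h, by simp⟩

lemma pal_mono (a : A) (x : List A) : Pal x ⊆ Pal (a :: x) :=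
  fun _ h => ⟨List.infix_cons_iff.2 (Or.inr h.1), h.2⟩

lemma ps_mono (a : A) (x : List A) (m : ℕ) : PS x m ⊆ PS (a :: x) m :=
  fun _ h => ⟨pal_mono a x h.1, h.2⟩

lemma key {a : A} {x u v : List A} (hv : v <+: a :: x) (hp : IsPalindrome v)
    (hu : u <+: v) (hl : u.length < v.length) : u.reverse <:+: x := by
  have h1 : u.reverse <:+ v := by
    have := List.reverse_suffix.2 hu
    rwa [hp] at this
  cases v with
  | nil => simp at hl
  | cons b v' =>
    rw [List.cons_prefix_cons] at hv
    rcases List.suffix_cons_iff.1 h1 with h | h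
    · have := congrArg List.length h
      simp at this hl
      omega
    · exact h.isInfix.trans hv.2.isInfix

lemma new_sub (a : A) (x : List A) : (Pal (a :: x) \ Pal x).Subsingleton := by
  have pre : ∀ u ∈ Pal (a :: x) \ Pal x, u <+: a :: x := by
    rintro u ⟨h1, h2⟩
    rcases List.infix_cons_iff.1 h1.1 with h | h
    · exact h
    · exact absurd ⟨h, h1.2⟩ h2
  have lt : ∀ u ∈ Pal (a :: x) \ Pal x, ∀ v ∈ Pal (a :: x) \ Pal x,
      ¬ u.length < v.length := by
    intro u hu v hv hl
    have h := key (pre v hv) hv.1.2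
      (List.prefix_of_prefix_length_le (pre u hu) (pre v hv) hl.le) hl
    rw [hu.1.2] at h
    exact hu.2 ⟨h, hu.1.2⟩
  intro u hu v hv
  have h1 := lt u hu v hv
  have h2 := lt v hv u hu
  exact (List.prefix_of_prefix_length_le (pre u hu) (pre v hv) (by omega)).eq_of_length (by omega)

lemma pal_card_cons (a : A) (x : List A) :
    (Pal (a :: x)).ncard = (Pal (a :: x) \ Pal x).ncard + (Pal x).ncard :=
  (Set.ncard_sdiff_add_ncard_of_subset (pal_mono a x) (pal_finite _)).symm

lemma pal_nil : Pal ([] : List A) = {[]} := by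
  ext u
  simp only [Pal, Set.mem_setOf_eq, List.infix_nil, Set.mem_singleton_iff]
  constructor
  · exact fun h => h.1
  · rintro rfl
    exact ⟨rfl, rfl⟩

lemma pal_card_le (w : List A) : (Pal w).ncard ≤ w.length + 1 := by
  induction w with
  | nil => simp [pal_nil]
  | cons a x ih =>
    have h := pal_card_cons a x
    have h1 : (Pal (a :: x) \ Pal x).ncard ≤ 1 := by
      rw [Set.ncard_le_one ((pal_finite _).subset Set.diff_subset)]
      exact fun u hu v hv => new_sub a x hu hv
    simp only [List.length_cons]
    omega

lemma gs_card (w : List A) (hw : (Pal w).ncard = w.length + 1) (m : ℕ) :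
    (GS w m).ncard ≤ 2 * (PS w m).ncard := by
  induction w with
  | nil =>
    have h1 : GS ([] : List A) m ⊆ {[]} := by
      rintro v ⟨_, h | h⟩ <;> simpa using h
    have h2 : {[]} ⊆ PS ([] : List A) m := by
      rintro v rfl
      exact ⟨by simp [pal_nil], by simp⟩
    have h3 := Set.ncard_le_ncard h1
    have h4 := Set.ncard_le_ncard h2 (ps_finite _ _)
    rw [Set.ncard_singleton] at h3 h4
    omega
  | cons a x ih =>
    have hc := pal_card_cons a x
    have hx := pal_card_le x
    have h1 : (Pal (a :: x) \ Pal x).ncard ≤ 1 := by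
      rw [Set.ncard_le_one ((pal_finite _).subset Set.diff_subset)]
      exact fun u hu v hv => new_sub a x hu hv
    simp only [List.length_cons] at hw
    have ih := ih (by omega)
    have hne : (Pal (a :: x) \ Pal x).Nonempty := by
      apply Set.nonempty_of_ncard_ne_zero
      omega
    obtain ⟨u, hu, hux⟩ := hne
    have hup : u <+: a :: x := by
      rcases List.infix_cons_iff.1 hu.1 with h | h
      · exact h
      · exact absurd ⟨h, hu.2⟩ hux
    by_cases hlen : u.length ≤ m
    · have hP : (PS x m).ncard + 1 ≤ (PS (a :: x) m).ncard := by
        have hins : insert u (PS x m) ⊆ PS (a :: x) m := by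
          rintro v (rfl | h)
          · exact ⟨hu, hlen⟩
          · exact ps_mono a x m h
        have := Set.ncard_le_ncard hins (ps_finite _ _)
        rwa [Set.ncard_insert_of_notMem (fun h => hux h.1) (ps_finite _ _)] at this
      have hG : GS (a :: x) m ⊆
          insert ((a :: x).take m) (insert ((a :: x).take m).reverse (GS x m)) := by
        rintro v ⟨hvl, h | h⟩
        · rcases List.infix_cons_iff.1 h with h | h
          · left
            rw [← hvl]
            exact List.prefix_iff_eq_take.1 h
          · exact Or.inr (Or.inr ⟨hvl, Or.inl h⟩)
        · rcases List.infix_cons_iff.1 h with h | h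
          · right
            left
            have := List.prefix_iff_eq_take.1 h
            rw [List.length_reverse, hvl] at this
            rw [← this, List.reverse_reverse]
          · exact Or.inr (Or.inr ⟨hvl, Or.inr h⟩)
      have h2 := Set.ncard_le_ncard hG (((gs_finite x m).insert _).insert _)
      have h3 := Set.ncard_insert_le ((a :: x).take m)
        (insert ((a :: x).take m).reverse (GS x m))
      have h4 := Set.ncard_insert_le ((a :: x).take m).reverse (GS x m)
      omega
    · push Not at hlen
      have hG : GS (a :: x) m ⊆ GS x m := by
        rintro v ⟨hvl, h | h⟩
        · rcases List.infix_cons_iff.1 h with h | h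
          · exact ⟨hvl, Or.inr (key hup hu.2
              (List.prefix_of_prefix_length_le h hup (by omega)) (by omega))⟩
          · exact ⟨hvl, Or.inl h⟩
        · rcases List.infix_cons_iff.1 h with h | h
          · have := key hup hu.2
              (List.prefix_of_prefix_length_le h hup (by simp; omega)) (by simp; omega)
            rw [List.reverse_reverse] at this
            exact ⟨hvl, Or.inl this⟩
          · exact ⟨hvl, Or.inr h⟩
      have h2 := Set.ncard_le_ncard hG (gs_finite _ _)
      have h3 := Set.ncard_le_ncard (ps_mono a x m) (ps_finite _ _)
      omega

lemma pal_half {u v : List A} (hu : IsPalindrome u) (hv : IsPalindrome v)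
    (hl : u.length = v.length)
    (ht : u.take ((u.length + 1) / 2) = v.take ((u.length + 1) / 2)) : u = v := by
  have hd : ∀ i, i < (u.length + 1) / 2 → u[i]? = v[i]? := by
    intro i hi
    have := congrArg (fun l => l[i]?) ht
    simpa [List.getElem?_take, hi] using this
  apply List.ext_getElem?
  intro i
  by_cases hi : i < (u.length + 1) / 2
  · exact hd i hi
  · by_cases hi2 : i < u.length
    · rw [← hu, ← hv, List.getElem?_reverse hi2, List.getElem?_reverse (by omega), ← hl]
      exact hd _ (by omega)
    · rw [List.getElem?_eq_none (by omega), List.getElem?_eq_none (by omega)]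

lemma ps_rec (w : List A) (hw : (Pal w).ncard = w.length + 1) (n : ℕ) :
    (PS w n).ncard ≤ (n + 1) * (2 * (PS w ((n + 1) / 2)).ncard) := by
  classical
  have hmem : ∀ k, ∃ s : Finset (List A), ∀ v, v ∈ s ↔ v ∈ GS w k := fun k =>
    ⟨(gs_finite w k).toFinset, by simp⟩
  choose G hG using hmem
  have hGc : ∀ k, (G k).card = (GS w k).ncard := by
    intro k
    rw [← Set.ncard_coe_finset]
    congr 1
    ext v
    simpa using hG k v
  let T : Finset (Σ _ : ℕ, List A) := (Finset.range (n + 1)).sigma (fun k => G ((k + 1) / 2))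
  have hT : T.card ≤ (n + 1) * (2 * (PS w ((n + 1) / 2)).ncard) := by
    rw [Finset.card_sigma]
    calc _ ≤ ∑ k ∈ Finset.range (n + 1), 2 * (PS w ((n + 1) / 2)).ncard := by
          apply Finset.sum_le_sum
          intro k hk
          rw [hGc]
          refine (gs_card w hw _).trans ?_
          have hk := Finset.mem_range.1 hk
          apply Nat.mul_le_mul_left
          apply Set.ncard_le_ncard _ (ps_finite _ _)
          exact fun v hv => ⟨hv.1, hv.2.trans (by omega)⟩
      _ = _ := by simp
  rw [← Set.ncard_coe_finset] at hT
  refine le_trans ?_ hT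
  apply Set.ncard_le_ncard_of_injOn
    (fun u => (⟨u.length, u.take ((u.length + 1) / 2)⟩ : Σ _ : ℕ, List A)) _ _ T.finite_toSet
  · intro u hu
    simp only [T, Finset.coe_sigma, Set.mem_sigma_iff, Finset.mem_coe, Finset.mem_range, hG]
    refine ⟨by have := hu.2; omega, ?_, ?_⟩
    · simp
      omega
    · exact Or.inl ((List.take_prefix _ _).isInfix.trans hu.1.1)
  · intro u hu v hv h
    simp only [Sigma.mk.injEq, heq_eq_eq] at h
    apply pal_half hu.1.2 hv.1.2 h.1
    rw [h.2, h.1]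

lemma ps_one [Fintype A] (w : List A) : (PS w 1).ncard ≤ Fintype.card A + 1 := by
  have h : PS w 1 ⊆ insert [] ((fun a : A => [a]) '' Set.univ) := by
    rintro u ⟨_, h⟩
    match u, h with
    | [], _ => simp
    | [a], _ => simp
  refine (Set.ncard_le_ncard h ((Set.toFinite _).insert _)).trans ?_
  refine (Set.ncard_insert_le _ _).trans ?_
  have := Set.ncard_image_le (f := fun a : A => [a]) (Set.toFinite (Set.univ : Set A))
  rw [Set.ncard_univ, Nat.card_eq_fintype_card] at this
  omega

lemma ps_pow [Fintype A] (w : List A) (hw : (Pal w).ncard = w.length + 1) (k : ℕ) :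
    (PS w (2 ^ k)).ncard ≤ (Fintype.card A + 1) * 2 ^ (3 * k ^ 2) := by
  induction k with
  | zero => simpa using ps_one w
  | succ k ih =>
    have h := ps_rec w hw (2 ^ (k + 1))
    have e : (2 ^ (k + 1) + 1) / 2 = 2 ^ k := by
      rw [pow_succ]
      omega
    rw [e] at h
    calc _ ≤ _ := h
      _ ≤ (2 ^ (k + 2)) * (2 * ((Fintype.card A + 1) * 2 ^ (3 * k ^ 2))) := by
          gcongr
          have := Nat.one_le_two_pow (n := k)
          rw [pow_succ, pow_succ]
          omega
      _ = (Fintype.card A + 1) * 2 ^ (k + 3 + 3 * k ^ 2) := by ring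
      _ ≤ _ := by
          gcongr
          · norm_num
          · nlinarith

lemma sum_long (ws : List (List A)) (m : ℕ) :
    (ws.filter (fun u => m < u.length)).length * m ≤ ws.flatten.length := by
  induction ws with
  | nil => simp
  | cons u t ih =>
    rw [List.flatten_cons, List.length_append, List.filter_cons]
    split_ifs with h
    · simp only [List.length_cons, decide_eq_true_eq] at h ⊢
      nlinarith
    · omega

lemma count (w : List A) (ws : List (List A)) (h : IsUPSFactorization w ws) (m : ℕ) :
    ∃ l, ws.length ≤ (PS w m).ncard + l ∧ l * m ≤ w.length := by
  classical
  obtain ⟨_, hnd, hpal, hfl, _⟩ := h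
  refine ⟨(ws.filter (fun u => m < u.length)).length, ?_, ?_⟩
  · rw [List.length_eq_length_filter_add (l := ws) (fun u => decide (m < u.length)), add_comm]
    gcongr
    rw [← List.toFinset_card_of_nodup (hnd.filter _), ← Set.ncard_coe_finset]
    apply Set.ncard_le_ncard _ (ps_finite _ _)
    intro u hu
    simp at hu
    refine ⟨⟨?_, (hpal u hu.1).2⟩, hu.2⟩
    rw [hfl]
    exact List.infix_of_mem_flatten hu.1
  · rw [hfl]
    exact sum_long ws m

end RichAux

/-- For a given finite alphabet `A`, there exist positive real constants `μ`, `π`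
such that every finite nonempty rich word `w` over `A` with `n = |w|` satisfies
`LUF(w) ≤ μ * n / e^{π √(ln n)}`. -/
theorem statement0 (A : Type*) [Fintype A] :
    ∃ μ π : ℝ, 0 < μ ∧ 0 < π ∧
      ∀ w : List A, w ≠ [] → IsRichWord w →
        ∀ ws : List (List A), IsUPSFactorization w ws →
          (ws.length : ℝ) ≤
            μ * (w.length : ℝ) / Real.exp (π * Real.sqrt (Real.log (w.length : ℝ))) := by
  refine ⟨3 * (Fintype.card A + 1) + 2, 1 / 6, by positivity, by norm_num, ?_⟩
  intro w hne hrich ws hws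
  have hn1 : 1 ≤ w.length := List.length_pos_iff.2 hne
  have hn : (1 : ℝ) ≤ w.length := by exact_mod_cast hn1
  generalize hL : Real.log (w.length : ℝ) = L
  have hL0 : 0 ≤ L := hL ▸ Real.log_nonneg hn
  have hexp : Real.exp L = w.length := by rw [← hL, Real.exp_log (by linarith)]
  generalize hs : Real.sqrt L = s
  have hs0 : 0 ≤ s := hs ▸ Real.sqrt_nonneg L
  have hss : s ^ 2 = L := by rw [← hs, Real.sq_sqrt hL0]
  obtain ⟨k, hk⟩ : ∃ k : ℕ, k = ⌊s / 3⌋₊ := ⟨_, rfl⟩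
  have hk1 : (k : ℝ) ≤ s / 3 := hk ▸ Nat.floor_le (by positivity)
  have hk2 : s / 3 < k + 1 := hk ▸ Nat.lt_floor_add_one _
  obtain ⟨l, h1, h2⟩ := RichAux.count w ws hws (2 ^ k)
  have h3 := RichAux.ps_pow w hrich k
  have h4 : (ws.length : ℝ) ≤ (Fintype.card A + 1) * 2 ^ (3 * k ^ 2) + l := by
    exact_mod_cast h1.trans (by omega)
  have h2' : (l : ℝ) * 2 ^ k ≤ Real.exp L := by
    rw [hexp]
    exact_mod_cast h2
  have hlog2 : (1 / 2 : ℝ) ≤ Real.log 2 := by linarith [Real.log_two_gt_d9]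
  have hlog2' : Real.log 2 ≤ 1 := by linarith [Real.log_two_lt_d9]
  have two : ∀ j : ℕ, (2 : ℝ) ^ j = Real.exp (j * Real.log 2) := by
    intro j
    rw [Real.exp_nat_mul, Real.exp_log (by norm_num)]
  rw [le_div_iff₀ (Real.exp_pos _), ← hexp]
  have hE := Real.exp_pos (1 / 6 * s)
  have hA : (2 : ℝ) ^ (3 * k ^ 2) * Real.exp (1 / 6 * s) ≤ 3 * Real.exp L := by
    have e1 : Real.exp 1 ≤ 3 := by linarith [Real.exp_one_lt_d9]
    have hk3 : (k : ℝ) ^ 2 ≤ L / 9 := by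
      rw [← hss]
      have : (0 : ℝ) ≤ k := Nat.cast_nonneg k
      nlinarith
    calc _ = Real.exp (3 * (k : ℝ) ^ 2 * Real.log 2 + 1 / 6 * s) := by
          rw [two, Real.exp_add]
          push_cast
          rfl
      _ ≤ Real.exp (1 + L) := by
          apply Real.exp_le_exp.2
          have : (k : ℝ) ^ 2 * Real.log 2 ≤ (k : ℝ) ^ 2 * 1 :=
            mul_le_mul_of_nonneg_left hlog2' (sq_nonneg _)
          nlinarith [sq_nonneg (s - 1)]
      _ = Real.exp 1 * Real.exp L := Real.exp_add _ _
      _ ≤ _ := by gcongr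
  have hB : (l : ℝ) * Real.exp (1 / 6 * s) ≤ 2 * Real.exp L := by
    have : Real.exp (1 / 6 * s) ≤ 2 ^ (k + 1) := by
      rw [two]
      apply Real.exp_le_exp.2
      push_cast
      nlinarith
    calc _ ≤ (l : ℝ) * 2 ^ (k + 1) := by gcongr
      _ = 2 * (l * 2 ^ k) := by ring
      _ ≤ _ := by gcongr
  calc _ ≤ ((Fintype.card A + 1) * 2 ^ (3 * k ^ 2) + l) * Real.exp (1 / 6 * s) := by gcongr
    _ = (Fintype.card A + 1) * (2 ^ (3 * k ^ 2) * Real.exp (1 / 6 * s))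
        + l * Real.exp (1 / 6 * s) := by ring
    _ ≤ (Fintype.card A + 1) * (3 * Real.exp L) + 2 * Real.exp L := by gcongr
    _ = _ := by ring
end

section
/- Let w be a finite nonempty rich word over an alphabet of size q, let n = |w|, and let t be a positive integer such that ∑_{i=1}^{t} i·⌊c₁ i^{c₂ ln i}⌋ ≥ n. Then the length of the UPS-factorization of w satisfies LUF(w) ≤ ∑_{i=1}^{t} c₁ i^{c₂ ln i}. -/
section Helpers
open Classical in
/-- factors of length n -/
noncomputable def facN {A : Type*} (n : ℕ) (w : List A) : Finset (List A) :=
  w.sublists.toFinset.filter (fun u => u <:+: w ∧ u.length = n)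

lemma mem_facN {A : Type*} {n : ℕ} {w u : List A} :
    u ∈ facN n w ↔ u <:+: w ∧ u.length = n := by
  classical
  simp only [facN, Finset.mem_filter, List.mem_toFinset, List.mem_sublists]
  exact ⟨fun h => h.2, fun h => ⟨h.1.sublist, h⟩⟩

/-- class of a word up to reversal -/
def cls {A : Type*} (u : List A) : Sym2 (List A) := s(u, u.reverse)

lemma cls_eq {A : Type*} {u v : List A} : cls u = cls v ↔ u = v ∨ u = v.reverse := by
  simp only [cls, Sym2.eq_iff]
  constructor
  · rintro (⟨h, -⟩ | ⟨h, -⟩) <;> simp [h]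
  · rintro (h | h) <;> simp [h]

open Classical in
/-- all classes of factors of length n -/
noncomputable def clsN {A : Type*} (n : ℕ) (w : List A) : Finset (Sym2 (List A)) :=
  (facN n w).image cls

open Classical in
/-- palindromic factors of length n -/
noncomputable def palN {A : Type*} (n : ℕ) (w : List A) : Finset (List A) :=
  (facN n w).filter IsPalindrome

open Classical in
/-- classes of non-palindromic factors of length n -/
noncomputable def nonN {A : Type*} (n : ℕ) (w : List A) : Finset (Sym2 (List A)) :=
  ((facN n w).filter (fun u => ¬ IsPalindrome u)).image cls

/-- every suffix has a palindromic prefix occurring only once -/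
def GoodW {A : Type*} : List A → Prop
  | [] => True
  | a :: w => GoodW w ∧ ∃ s, IsPalindrome s ∧ s <+: a :: w ∧ ¬ s <:+: w

lemma fin_pal {A : Type*} (w : List A) : {u : List A | u <:+: w ∧ IsPalindrome u}.Finite := by
  classical
  refine (w.sublists.toFinset.finite_toSet).subset ?_
  intro u hu
  simpa using hu.1.sublist

lemma short_old {A : Type*} {a : A} {w s s' : List A} (hs : s <+: a :: w) (hs' : s' <+: a :: w)
    (p : IsPalindrome s) (p' : IsPalindrome s') (hl : s.length < s'.length) : s <:+: w := by
  have h1 : s <+: s' := List.prefix_of_prefix_length_le hs hs' hl.le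
  have h2 : s <:+ s' := by
    have := List.reverse_suffix.2 h1
    rwa [p, p'] at this
  obtain ⟨b, l, rfl⟩ : ∃ b l, s' = b :: l := by
    cases s' with
    | nil => simp at hl
    | cons b l => exact ⟨b, l, rfl⟩
  have h3 : l <+: w := (List.cons_prefix_cons.1 hs').2
  rcases List.suffix_cons_iff.1 h2 with h | h
  · subst h; simp at hl
  · exact h.isInfix.trans h3.isInfix

lemma pal_step {A : Type*} (a : A) (w : List A)
    (h : ∀ s, IsPalindrome s → s <+: a :: w → s <:+: w) :
    {u : List A | u <:+: a :: w ∧ IsPalindrome u} = {u : List A | u <:+: w ∧ IsPalindrome u} := by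
  ext u
  simp only [Set.mem_ofPred_eq, List.infix_cons_iff]
  constructor
  · rintro ⟨h1 | h1, h2⟩
    · exact ⟨h u h2 h1, h2⟩
    · exact ⟨h1, h2⟩
  · rintro ⟨h1, h2⟩
    exact ⟨Or.inr h1, h2⟩

lemma pal_step_le {A : Type*} (a : A) (w : List A) :
    {u : List A | u <:+: a :: w ∧ IsPalindrome u}.ncard ≤
      {u : List A | u <:+: w ∧ IsPalindrome u}.ncard + 1 := by
  by_cases h : ∀ s, IsPalindrome s → s <+: a :: w → s <:+: w
  · rw [pal_step a w h]; omega
  · push Not at h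
    obtain ⟨s, ps, hs, hn⟩ := h
    refine le_trans (Set.ncard_le_ncard (t := insert s {u : List A | u <:+: w ∧ IsPalindrome u})
      ?_ ((fin_pal w).insert s)) (Set.ncard_insert_le _ _)
    rintro u ⟨hu, pu⟩
    rcases List.infix_cons_iff.1 hu with h1 | h1
    · by_cases hw : u <:+: w
      · exact Or.inr ⟨hw, pu⟩
      · left
        rcases lt_trichotomy u.length s.length with h2 | h2 | h2
        · exact absurd (short_old h1 hs pu ps h2) hw
        · exact (List.prefix_of_prefix_length_le h1 hs h2.le).eq_of_length h2
        · exact absurd (short_old hs h1 ps pu h2) hn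
    · exact Or.inr ⟨h1, pu⟩

lemma pal_le {A : Type*} (w : List A) :
    {u : List A | u <:+: w ∧ IsPalindrome u}.ncard ≤ w.length + 1 := by
  induction w with
  | nil =>
    have : {u : List A | u <:+: [] ∧ IsPalindrome u} ⊆ {[]} := by
      rintro u ⟨hu, -⟩
      simpa using hu
    simpa using Set.ncard_le_ncard this (Set.finite_singleton _)
  | cons a w ih =>
    have := pal_step_le a w
    simp only [List.length_cons]
    omega

lemma rich_good {A : Type*} (w : List A) (h : IsRichWord w) : GoodW w := by
  induction w with
  | nil => trivial
  | cons a w ih =>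
    unfold IsRichWord at h ih
    have h1 := pal_step_le a w
    have h2 := pal_le w
    simp only [List.length_cons] at h
    refine ⟨ih (by omega), ?_⟩
    by_contra hc
    push Not at hc
    rw [pal_step a w hc] at h
    omega

lemma clsN_mono {A : Type*} (n : ℕ) (a : A) (w : List A) : clsN n w ⊆ clsN n (a :: w) := by
  classical
  apply Finset.image_subset_image
  intro u hu
  rw [mem_facN] at hu ⊢
  exact ⟨List.infix_cons hu.1, hu.2⟩

lemma mem_clsN_infix {A : Type*} {n : ℕ} {w v : List A} (h : cls v ∈ clsN n w) :
    v <:+: w ∨ v.reverse <:+: w := by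
  classical
  obtain ⟨u, hu, hv⟩ := Finset.mem_image.1 h
  rw [mem_facN] at hu
  rcases cls_eq.1 hv with rfl | rfl
  · exact Or.inl hu.1
  · exact Or.inr hu.1

lemma non_le {A : Type*} (n : ℕ) (w : List A) (hw : GoodW w) :
    (nonN (n+1) w).card ≤ (clsN n w).card := by
  classical
  induction w with
  | nil =>
    have : nonN (n+1) ([] : List A) = ∅ := by
      apply Finset.eq_empty_of_forall_notMem
      intro c hc
      obtain ⟨u, hu, -⟩ := Finset.mem_image.1 hc
      have := mem_facN.1 (Finset.mem_filter.1 hu).1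
      simp at this
      simp [this.1] at this
    simp [this]
  | cons a w ih =>
    obtain ⟨hg, s, ps, hs, hsn⟩ := hw
    have ih := ih hg
    by_cases hsub : nonN (n+1) (a :: w) ⊆ nonN (n+1) w
    · exact (Finset.card_le_card hsub).trans (ih.trans (Finset.card_le_card (clsN_mono n a w)))
    obtain ⟨c, hc, hcn⟩ := Finset.not_subset.1 hsub
    obtain ⟨x, hx, rfl⟩ := Finset.mem_image.1 hc
    obtain ⟨hx, px⟩ := Finset.mem_filter.1 hx
    obtain ⟨hx, lx⟩ := mem_facN.1 hx
    have hxw : ¬ x <:+: w := fun h => hcn (Finset.mem_image.2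
      ⟨x, Finset.mem_filter.2 ⟨mem_facN.2 ⟨h, lx⟩, px⟩, rfl⟩)
    have hxrw : ¬ x.reverse <:+: w := fun h => hcn (Finset.mem_image.2
      ⟨x.reverse, Finset.mem_filter.2 ⟨mem_facN.2 ⟨h, by simpa using lx⟩, fun h => px (by
        unfold IsPalindrome at h ⊢; rw [List.reverse_reverse] at h; exact h.symm)⟩,
        cls_eq.2 (Or.inr rfl)⟩)
    have hxp : x <+: a :: w := (List.infix_cons_iff.1 hx).resolve_right hxw
    -- nonN is contained in the insertion of the class of x
    have h1 : nonN (n+1) (a :: w) ⊆ insert (cls x) (nonN (n+1) w) := by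
      intro c hc
      obtain ⟨y, hy, rfl⟩ := Finset.mem_image.1 hc
      obtain ⟨hy, py⟩ := Finset.mem_filter.1 hy
      obtain ⟨hy, ly⟩ := mem_facN.1 hy
      rcases List.infix_cons_iff.1 hy with h | h
      · have : y = x := (List.prefix_of_prefix_length_le h hxp (by omega)).eq_of_length (by omega)
        simp [this]
      · exact Finset.mem_insert_of_mem (Finset.mem_image.2
          ⟨y, Finset.mem_filter.2 ⟨mem_facN.2 ⟨h, ly⟩, py⟩, rfl⟩)
    -- the length n prefix is new
    have hvx : x.take n <+: x := List.take_prefix _ _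
    have lv : (x.take n).length = n := by simp [lx]
    have hvp := hvx.trans hxp
    have hnew : cls (x.take n) ∉ clsN n w := by
      intro hmem
      have hls : n < s.length := by
        by_contra hcon
        have hsv : s <+: x.take n := List.prefix_of_prefix_length_le hs hvp (by omega)
        rcases mem_clsN_infix hmem with h | h
        · exact hsn (hsv.isInfix.trans h)
        · have h2 : s <:+ (x.take n).reverse := by
            have := List.reverse_suffix.2 hsv
            rwa [ps] at this
          exact hsn (h2.isInfix.trans h)
      have hxs : x <+: s := List.prefix_of_prefix_length_le hxp hs (by omega)
      by_cases hl : s.length = n + 1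
      · have : x = s := hxs.eq_of_length (by omega)
        exact px (this ▸ ps)
      have h2 : x.reverse <:+ s := by
        have := List.reverse_suffix.2 hxs
        rwa [ps] at this
      obtain ⟨b, l, rfl⟩ : ∃ b l, s = b :: l := by
        cases s with
        | nil => simp at hls
        | cons b l => exact ⟨b, l, rfl⟩
      have h3 : l <+: w := (List.cons_prefix_cons.1 hs).2
      rcases List.suffix_cons_iff.1 h2 with h | h
      · apply hl
        rw [← h]; simpa using lx
      · exact hxrw (h.isInfix.trans h3.isInfix)
    have h2 : insert (cls (x.take n)) (clsN n w) ⊆ clsN n (a :: w) := by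
      apply Finset.insert_subset _ (clsN_mono n a w)
      exact Finset.mem_image.2 ⟨_, mem_facN.2 ⟨hvp.isInfix, lv⟩, rfl⟩
    have h3 := Finset.card_le_card h1
    have h4 := Finset.card_le_card h2
    rw [Finset.card_insert_of_notMem hnew] at h4
    have h5 := Finset.card_insert_le (cls x) (nonN (n+1) w)
    omega

lemma cls_step {A : Type*} (n : ℕ) (w : List A) (hw : GoodW w) :
    (clsN (n+1) w).card ≤ (clsN n w).card + (palN (n+1) w).card := by
  classical
  have h : clsN (n+1) w ⊆ nonN (n+1) w ∪ (palN (n+1) w).image cls := by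
    intro c hc
    obtain ⟨u, hu, rfl⟩ := Finset.mem_image.1 hc
    by_cases p : IsPalindrome u
    · exact Finset.mem_union_right _ (Finset.mem_image.2
        ⟨u, Finset.mem_filter.2 ⟨hu, p⟩, rfl⟩)
    · exact Finset.mem_union_left _ (Finset.mem_image.2
        ⟨u, Finset.mem_filter.2 ⟨hu, p⟩, rfl⟩)
  have h1 := Finset.card_le_card h
  have h2 := Finset.card_union_le (nonN (n+1) w) ((palN (n+1) w).image cls)
  have h3 : ((palN (n+1) w).image cls).card ≤ _ := Finset.card_image_le
  have h4 := non_le n w hw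
  omega

lemma fac_le {A : Type*} (n : ℕ) (w : List A) : (facN n w).card ≤ 2 * (clsN n w).card := by
  classical
  apply Finset.card_le_mul_card_image
  intro c hc
  obtain ⟨u, hu, rfl⟩ := Finset.mem_image.1 hc
  refine le_trans (Finset.card_le_card (t := {u, u.reverse}) ?_) Finset.card_le_two
  intro y hy
  have := cls_eq.1 (Finset.mem_filter.1 hy).2
  simpa using this

lemma pal_half {A : Type*} {n : ℕ} {u v : List A} (lu : u.length = n) (lv : v.length = n)
    (pu : IsPalindrome u) (pv : IsPalindrome v)
    (h : u.take ((n+1)/2) = v.take ((n+1)/2)) : u = v := by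
  apply List.ext_getElem (by omega)
  intro i h1 h2
  have key : ∀ j (h1 : j < u.length) (h2 : j < v.length), j < (n+1)/2 → u[j] = v[j] := by
    intro j h1 h2 hj
    have e1 : (u.take ((n+1)/2))[j]? = u[j]? := List.getElem?_take_of_lt hj
    have e2 : (v.take ((n+1)/2))[j]? = v[j]? := List.getElem?_take_of_lt hj
    rw [h, e2] at e1
    simpa [h1, h2] using e1.symm
  by_cases hi : i < (n+1)/2
  · exact key i h1 h2 hi
  · have a1 : u[i] = u[u.length - 1 - i] := by
      have := List.getElem_reverse (l := u) (i := i) (by simpa using h1)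
      simpa only [show u.reverse = u from pu] using this
    have a2 : v[i] = v[v.length - 1 - i] := by
      have := List.getElem_reverse (l := v) (i := i) (by simpa using h2)
      simpa only [show v.reverse = v from pv] using this
    rw [a1, a2]
    have := key (n - 1 - i) (by omega) (by omega) (by omega)
    simpa only [lu, lv] using this

lemma pal_fac {A : Type*} (n : ℕ) (w : List A) :
    (palN n w).card ≤ (facN ((n+1)/2) w).card := by
  classical
  apply Finset.card_le_card_of_injOn (fun u => u.take ((n+1)/2))
  · intro u hu
    have hu := mem_facN.1 (Finset.mem_filter.1 (Finset.mem_coe.1 hu)).1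
    apply Finset.mem_coe.2
    refine mem_facN.2 ⟨(List.take_prefix _ _).isInfix.trans hu.1, ?_⟩
    simp only [List.length_take]
    omega
  · intro u hu v hv h
    have hu := Finset.mem_filter.1 (Finset.mem_coe.1 hu)
    have hv := Finset.mem_filter.1 (Finset.mem_coe.1 hv)
    exact pal_half (mem_facN.1 hu.1).2 (mem_facN.1 hv.1).2 hu.2 hv.2 h

lemma pal_cls {A : Type*} (n : ℕ) (w : List A) :
    (palN n w).card ≤ 2 * (clsN ((n+1)/2) w).card :=
  (pal_fac n w).trans (fac_le _ w)

lemma fac_pow {A : Type*} [Fintype A] (n : ℕ) (w : List A) :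
    (facN n w).card ≤ Fintype.card A ^ n := by
  classical
  rw [← card_vector]
  refine le_trans ?_ (Finset.card_image_le (s := (Finset.univ : Finset (List.Vector A n)))
    (f := Subtype.val))
  apply Finset.card_le_card
  intro u hu
  exact Finset.mem_image.2 ⟨⟨u, (mem_facN.1 hu).2⟩, Finset.mem_univ _, rfl⟩

lemma cls_pow {A : Type*} [Fintype A] (n : ℕ) (w : List A) :
    (clsN n w).card ≤ Fintype.card A ^ n := by
  classical
  exact Finset.card_image_le.trans (fac_pow n w)

/-- the recursive bound -/
lemma cls_bound {A : Type*} [Fintype A] (w : List A) (hw : GoodW w) (H : ℝ → ℝ)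
    (h1 : (Fintype.card A : ℝ) ≤ H 1) (h2 : (Fintype.card A : ℝ) ^ 2 ≤ H 2)
    (hone : 1 ≤ H 1)
    (hmono : ∀ x y : ℝ, 1 ≤ x → x ≤ y → H x ≤ H y)
    (hrec : ∀ n : ℝ, 3 ≤ n → 3 * n * H (2 / 3 * n) ≤ H n) (n : ℕ) (hn : 1 ≤ n) :
    ((clsN n w).card : ℝ) ≤ H n := by
  induction n using Nat.strong_induction_on with
  | _ n ih =>
  by_cases e1 : n = 1
  · subst e1
    have := cls_pow 1 w
    rw [pow_one] at this
    have h3 : ((clsN 1 w).card : ℝ) ≤ Fintype.card A := by exact_mod_cast this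
    simpa using h3.trans h1
  by_cases e2 : n = 2
  · subst e2
    have := cls_pow 2 w
    have h3 : ((clsN 2 w).card : ℝ) ≤ (Fintype.card A : ℝ) ^ 2 := by exact_mod_cast this
    simpa using h3.trans h2
  have hn3 : 3 ≤ n := by omega
  have hn3' : (3:ℝ) ≤ n := by exact_mod_cast hn3
  have hH : 1 ≤ H (2/3 * n) := hone.trans (hmono _ _ le_rfl (by linarith))
  have key : ∀ m : ℕ, m ≤ n → ((clsN m w).card : ℝ) ≤ 1 + 2 * m * H (2/3 * n) := by
    intro m
    induction m with
    | zero =>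
      intro _
      have := cls_pow 0 w
      simp only [pow_zero] at this
      have : ((clsN 0 w).card : ℝ) ≤ 1 := by exact_mod_cast this
      simpa using this
    | succ m ihm =>
      intro hm
      have a1 := ihm (by omega)
      have a2 := cls_step m w hw
      have a3 := pal_cls (m+1) w
      have a4 := ih ((m+1+1)/2) (by omega) (by omega)
      have a5 : (((m+1+1)/2 : ℕ) : ℝ) ≤ 2/3 * n := by
        have : 3 * ((m+1+1)/2) ≤ 2 * n := by omega
        have : (3:ℝ) * (((m+1+1)/2 : ℕ) : ℝ) ≤ 2 * n := by exact_mod_cast this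
        linarith
      have a6 : (1:ℝ) ≤ (((m+1+1)/2 : ℕ) : ℝ) := by
        have : 1 ≤ (m+1+1)/2 := by omega
        exact_mod_cast this
      have a7 := a4.trans (hmono _ _ a6 a5)
      have a8 : ((clsN (m+1) w).card : ℝ) ≤
          (clsN m w).card + 2 * (clsN ((m+1+1)/2) w).card := by
        exact_mod_cast a2.trans (by omega)
      push_cast
      linarith
  have := key n le_rfl
  have := hrec n hn3'
  nlinarith

/-- the extremal counting argument -/
lemma count_arg {A : Type*} (ws : List (List A)) (hnd : ws.Nodup) (H : ℕ → ℝ) (t : ℕ) (ht : 0 < t)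
    (hpos : ∀ u ∈ ws, 1 ≤ u.length)
    (hH : ∀ i (S : Finset (List A)), 1 ≤ i → (∀ u ∈ S, u ∈ ws ∧ u.length = i) → (S.card : ℝ) ≤ H i)
    (hsum : (ws.flatten.length : ℝ) ≤ ∑ i ∈ Finset.Icc 1 t, (i : ℝ) * (⌊H i⌋ : ℝ)) :
    (ws.length : ℝ) ≤ ∑ i ∈ Finset.Icc 1 t, H i := by
  classical
  set S := ws.toFinset with hS
  have hc : S.card = ws.length := List.toFinset_card_of_nodup hnd
  have hlen : (ws.flatten.length : ℝ) = ∑ u ∈ S, (u.length : ℝ) := by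
    rw [List.length_flatten, ← List.sum_toFinset _ hnd]
    push_cast
    rfl
  have hle : ∀ i ∈ Finset.Icc 1 t,
      ((t:ℝ) - i) * ((S.filter (fun u => u.length = i)).card : ℝ) ≤ ((t:ℝ) - i) * (⌊H i⌋ : ℝ) := by
    intro i hi
    rw [Finset.mem_Icc] at hi
    apply mul_le_mul_of_nonneg_left
    · have h := hH i (S.filter (fun u => u.length = i)) hi.1 (by
        intro u hu
        simpa [hS] using hu)
      have : ((S.filter (fun u => u.length = i)).card : ℤ) ≤ ⌊H i⌋ :=
        Int.le_floor.2 (by exact_mod_cast h)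
      exact_mod_cast this
    · have : (i:ℝ) ≤ t := by exact_mod_cast hi.2
      linarith
  have h1 : ∑ u ∈ S, ((t:ℝ) - u.length) ≤
      ∑ u ∈ S.filter (fun u => u.length ∈ Finset.Icc 1 t), ((t:ℝ) - u.length) := by
    rw [← Finset.sum_filter_add_sum_filter_not S (fun u => u.length ∈ Finset.Icc 1 t)]
    have : ∑ u ∈ S.filter (fun u => ¬ u.length ∈ Finset.Icc 1 t), ((t:ℝ) - u.length) ≤ 0 := by
      apply Finset.sum_nonpos
      intro u hu
      rw [Finset.mem_filter, Finset.mem_Icc] at hu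
      have h3 := hpos u (by simpa [hS] using hu.1)
      have : t ≤ u.length := by
        have := hu.2
        omega
      have : (t:ℝ) ≤ u.length := by exact_mod_cast this
      linarith
    linarith
  have h2 : ∑ u ∈ S.filter (fun u => u.length ∈ Finset.Icc 1 t), ((t:ℝ) - u.length) =
      ∑ i ∈ Finset.Icc 1 t, ((t:ℝ) - i) * ((S.filter (fun u => u.length = i)).card : ℝ) := by
    rw [← Finset.sum_fiberwise_of_maps_to (t := Finset.Icc 1 t) (g := List.length)
      (fun u hu => (Finset.mem_filter.1 hu).2)]
    apply Finset.sum_congr rfl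
    intro i hi
    have : (S.filter (fun u => u.length ∈ Finset.Icc 1 t)).filter (fun u => u.length = i) =
        S.filter (fun u => u.length = i) := by
      ext u
      simp only [Finset.mem_filter]
      constructor
      · rintro ⟨⟨a, b⟩, c⟩
        exact ⟨a, c⟩
      · rintro ⟨a, c⟩
        exact ⟨⟨a, c ▸ hi⟩, c⟩
    rw [this, Finset.sum_congr rfl (g := fun _ => (t:ℝ) - i)]
    · rw [Finset.sum_const, nsmul_eq_mul, mul_comm]
    · intro u hu
      rw [(Finset.mem_filter.1 hu).2]
  have h3 := Finset.sum_le_sum hle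
  have h4 : ∑ i ∈ Finset.Icc 1 t, ((t:ℝ) - i) * (⌊H i⌋ : ℝ) =
      t * ∑ i ∈ Finset.Icc 1 t, (⌊H i⌋ : ℝ) - ∑ i ∈ Finset.Icc 1 t, (i : ℝ) * (⌊H i⌋ : ℝ) := by
    rw [Finset.mul_sum, ← Finset.sum_sub_distrib]
    apply Finset.sum_congr rfl
    intros; ring
  have h5 : ∑ u ∈ S, ((t:ℝ) - u.length) = t * ws.length - ws.flatten.length := by
    rw [hlen, Finset.sum_sub_distrib, Finset.sum_const, hc]
    simp [mul_comm]
  have h6 : (t:ℝ) * ws.length ≤ t * ∑ i ∈ Finset.Icc 1 t, (⌊H i⌋ : ℝ) := by linarith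
  have h7 : (0:ℝ) < t := by exact_mod_cast ht
  have h8 := le_of_mul_le_mul_left h6 h7
  exact h8.trans (Finset.sum_le_sum fun i _ => Int.floor_le _)

/-- the analytic recursion -/
lemma H_rec (c₁ c₂ : ℝ) (hc1 : 0 < c₁) (hc2 : 2 ≤ c₂ * Real.log (3/2)) (n : ℝ) (hn : 3 ≤ n) :
    3 * n * (c₁ * (2/3 * n) ^ (c₂ * Real.log (2/3 * n))) ≤ c₁ * n ^ (c₂ * Real.log n) := by
  have hn0 : 0 < n := by linarith
  have hm0 : 0 < 2/3 * n := by linarith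
  have hL : 0 < Real.log (3/2) := Real.log_pos (by norm_num)
  have e : Real.log (2/3 * n) = Real.log n - Real.log (3/2) := by
    rw [← Real.log_div (by positivity) (by norm_num)]
    congr 1; ring
  have e3 : Real.log (3 * n) = Real.log 3 + Real.log n := Real.log_mul (by norm_num) hn0.ne'
  have h3 : Real.log 3 ≤ Real.log n := Real.log_le_log (by norm_num) hn
  have h32 : Real.log (3/2) ≤ Real.log n := Real.log_le_log (by norm_num) (by linarith)
  rw [Real.rpow_def_of_pos hn0, Real.rpow_def_of_pos hm0, e]
  have h3n : 3 * n = Real.exp (Real.log 3 + Real.log n) := by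
    rw [← e3, Real.exp_log (by positivity)]
  rw [h3n, mul_left_comm, ← Real.exp_add]
  apply mul_le_mul_of_nonneg_left _ hc1.le
  apply Real.exp_le_exp.2
  have hln : 0 < Real.log n := by linarith
  have a : 2 * Real.log n ≤ (c₂ * Real.log (3/2)) * (2 * Real.log n - Real.log (3/2)) := by
    nlinarith
  nlinarith
end Helpers

/-- With the constants `δ, c₂, d, α, β, c₁` of the paper: if `w` is a finite
nonempty rich word over an alphabet of size `q ≥ 1`, `n = |w|`, and `t` is a
positive integer with `∑_{i=1}^{t} i·⌊c₁ i^{c₂ ln i}⌋ ≥ n`, then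
`LUF(w) ≤ ∑_{i=1}^{t} c₁ i^{c₂ ln i}`. -/
theorem statement10 (A : Type*) [Fintype A] (hq : 1 ≤ Fintype.card A)
    (δ c₂ d α β c₁ : ℝ)
    (hδ : δ = 3 / (2 * (Real.log 3 - Real.log 2)))
    (hc₂ : c₂ = δ * (Real.log 4 + 2 * Real.log (Fintype.card A)) + δ + δ * Real.log 2 + 2)
    (hd0 : 0 < d) (hd1 : d < 1)
    (hα : α = Real.sqrt (1 / c₂))
    (hβ : β = (-1 - d) / (2 * c₂))
    (hc₁ : c₁ = max
      (Real.exp ((δ * Real.log 2 + 2) * (Real.log 4 + 2 * Real.log (Fintype.card A))))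
      (Real.exp (-(β + d * β + c₂ * β ^ 2))))
    (w : List A) (hw : w ≠ []) (hrich : IsRichWord w)
    (t : ℕ) (ht : 0 < t)
    (hsum : (w.length : ℝ) ≤
      ∑ i ∈ Finset.Icc 1 t, (i : ℝ) * (⌊c₁ * (i : ℝ) ^ (c₂ * Real.log i)⌋ : ℝ)) :
    ∀ ws : List (List A), IsUPSFactorization w ws →
      (ws.length : ℝ) ≤ ∑ i ∈ Finset.Icc 1 t, c₁ * (i : ℝ) ^ (c₂ * Real.log i) := by
  have hq' : (1:ℝ) ≤ Fintype.card A := by exact_mod_cast hq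
  set q : ℝ := (Fintype.card A : ℝ) with hqdef
  have hlq : 0 ≤ Real.log q := Real.log_nonneg hq'
  have hq0 : 0 < q := by linarith
  have hL : 0 < Real.log 3 - Real.log 2 := by
    have := Real.log_lt_log (x := 2) (y := 3) (by norm_num) (by norm_num)
    linarith
  have hδ0 : 0 < δ := by rw [hδ]; positivity
  have hl2 : 0 < Real.log 2 := Real.log_pos (by norm_num)
  have hl4 : Real.log 4 = 2 * Real.log 2 := by
    rw [show (4:ℝ) = 2 ^ 2 by norm_num, Real.log_pow]; norm_num
  have hδL : δ * Real.log (3/2) = 3/2 := by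
    rw [Real.log_div (by norm_num) (by norm_num), hδ]
    field_simp
  have hl32 : 0 < Real.log (3/2) := Real.log_pos (by norm_num)
  have hl2' : 0.69 < Real.log 2 := by linarith [Real.log_two_gt_d9]
  have hc₂0 : 0 < c₂ := by rw [hc₂, hl4]; positivity
  have hc₂L : 2 ≤ c₂ * Real.log (3/2) := by
    have h1 : δ * (1 + Real.log 2) ≤ c₂ := by
      rw [hc₂, hl4]
      have : 0 ≤ δ * (2 * Real.log 2 + 2 * Real.log q) := by positivity
      linarith
    have h2 := mul_le_mul_of_nonneg_right h1 hl32.le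
    nlinarith
  have hc₁q : q ^ 2 ≤ c₁ := by
    have h1 : q ^ 2 = Real.exp (2 * Real.log q) := by
      rw [mul_comm, Real.exp_mul, Real.exp_log hq0]; norm_cast
    rw [hc₁, h1]
    refine le_trans (Real.exp_le_exp.2 ?_) (le_max_left _ _)
    have : 0 ≤ δ * Real.log 2 := by positivity
    nlinarith
  have hc₁1 : 1 ≤ c₁ := le_trans (by nlinarith) hc₁q
  have hc₁0 : 0 < c₁ := by linarith
  intro ws hws
  obtain ⟨-, hnd, hpal, hfl, -⟩ := hws
  have hgood := rich_good w hrich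
  have hmono : ∀ x y : ℝ, 1 ≤ x → x ≤ y →
      c₁ * x ^ (c₂ * Real.log x) ≤ c₁ * y ^ (c₂ * Real.log y) := by
    intro x y hx hxy
    rw [Real.rpow_def_of_pos (by linarith), Real.rpow_def_of_pos (by linarith)]
    apply mul_le_mul_of_nonneg_left _ hc₁0.le
    apply Real.exp_le_exp.2
    have h1 : 0 ≤ Real.log x := Real.log_nonneg hx
    have h2 : Real.log x ≤ Real.log y := Real.log_le_log (by linarith) hxy
    have h3 : Real.log x * Real.log x ≤ Real.log y * Real.log y := by nlinarith
    nlinarith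
  have hone : c₁ * (1:ℝ) ^ (c₂ * Real.log 1) = c₁ := by simp
  have hB := cls_bound w hgood (fun x => c₁ * x ^ (c₂ * Real.log x))
    (by show q ≤ c₁ * (1:ℝ) ^ (c₂ * Real.log 1)
        rw [hone]; nlinarith)
    (le_trans (hc₁q.trans hone.ge) (hmono 1 2 le_rfl (by norm_num)))
    (hc₁1.trans hone.ge) hmono (H_rec c₁ c₂ hc₁0 hc₂L)
  apply count_arg ws hnd (fun i : ℕ => c₁ * (i : ℝ) ^ (c₂ * Real.log i)) t ht
  · intro u hu
    exact List.length_pos_iff.2 (hpal u hu).1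
  · intro i S hi hS
    classical
    refine le_trans ?_ (hB i hi)
    have : S.card ≤ (clsN i w).card := by
      apply Finset.card_le_card_of_injOn cls
      · intro u hu
        have h := hS u hu
        refine Finset.mem_coe.2 (Finset.mem_image.2 ⟨u, mem_facN.2 ⟨?_, h.2⟩, rfl⟩)
        rw [hfl]
        obtain ⟨l₁, l₂, e⟩ := List.append_of_mem h.1
        exact ⟨l₁.flatten, l₂.flatten, by rw [e]; simp⟩
      · intro u hu v hv h
        rcases cls_eq.1 h with h | h
        · exact h
        · rw [h]; exact (hpal v (hS v hv).1).2
    exact_mod_cast this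
  · rw [← hfl]; exact hsum
end
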